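/- The infinite Hankel matrix of the normalized moment sequence has rank at most n in the following sense: for every choice of column indices 0 ≤ j_0 < j_1 < ⋯ < j_n, the (n+1)×(n+1) matrix whose (i,t)-entry is c_{i + j_t} (for 0 ≤ i, t ≤ n) has determinant zero. -/

import Mathlib

open Finset Polynomial PowerSeries

/-- The complete homogeneous symmetric polynomial of degree `j` evaluated at
`v : Fin m → ℝ` (sum of all monomials of total degree `j`, with `hsymm 0 v = 1`). -/
noncomputable def hsymm {m : ℕ} (j : ℕ) (v : Fin m → ℝ) : ℝ :=
  haveI := Classical.decPred (fun f : Fin j → Fin m => Monotone f)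
  ∑ f ∈ Finset.univ.filter (fun f : Fin j → Fin m => Monotone f), ∏ i, v (f i)

/-- The normalized moment sequence: `c_j = 0` for `j < d` and
`c_{d+j} = Σ_{i=1}^{n-d} α_i h_j(x_i, …, x_{i+d})`. -/
noncomputable def cseq (d n : ℕ) (x : Fin n → ℝ) (α : Fin (n - d) → ℝ) (j : ℕ) : ℝ :=
  if d ≤ j then
    ∑ i : Fin (n - d), α i * hsymm (j - d)
      (fun k : Fin (d + 1) => x ⟨i.1 + k.1, by have h1 := i.2; have h2 := k.2; omega⟩)
  else 0

/-- `Q(t) = ∏_{r=1}^{n} (1 - x_r t)`. -/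
noncomputable def Qpoly (n : ℕ) (x : Fin n → ℝ) : Polynomial ℝ :=
  ∏ r : Fin n, (1 - Polynomial.C (x r) * Polynomial.X)

/-- `R(t) = Σ_{i=1}^{n-d} α_i ∏_{r ∉ {i,…,i+d}} (1 - x_r t)`. -/
noncomputable def Rpoly (d n : ℕ) (x : Fin n → ℝ) (α : Fin (n - d) → ℝ) : Polynomial ℝ :=
  ∑ i : Fin (n - d), Polynomial.C (α i) *
    ∏ r ∈ Finset.univ.filter (fun r : Fin n => r.1 < i.1 ∨ i.1 + d < r.1),
      (1 - Polynomial.C (x r) * Polynomial.X)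

/-!
Each window generating series `∑ hⱼ(xᵢ, …, xᵢ₊d) tʲ` is the inverse of `∏ (1 - xᵣ t)` over the
window, so the generating series of `c` is the rational function `tᵈ R(t) / Q(t)`, where
`deg Q ≤ n` and `deg (tᵈ R) < n`. Comparing coefficients of `t ^ (n + k)` in
`Q c = tᵈ R` gives a linear relation among `c_k, …, c_{k+n}` whose coefficients, those of `Q`, do
not depend on `k`: a linear relation among the rows of the minor, nontrivial because `Q(0) = 1`.
-/

lemma natDegree_prod_one_sub_C_mul_X_le {ι R : Type*} [CommRing R] (s : Finset ι) (y : ι → R) :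
    (∏ r ∈ s, (1 - Polynomial.C (y r) * Polynomial.X)).natDegree ≤ #s := by
  have hfactor (r : ι) : (1 - Polynomial.C (y r) * Polynomial.X).natDegree ≤ 1 := by
    compute_degree
  calc (∏ r ∈ s, (1 - Polynomial.C (y r) * Polynomial.X)).natDegree
      ≤ ∑ r ∈ s, (1 - Polynomial.C (y r) * Polynomial.X).natDegree :=
        Polynomial.natDegree_prod_le s _
    _ ≤ #s := by simpa using sum_le_card_nsmul s _ 1 fun r _ ↦ hfactor r

section Hankel

variable {R : Type*} [CommRing R]

lemma det_eq_zero_of_vecMul_eq_zero_of_mem_nonZeroDivisors {ι : Type*} [Fintype ι] [DecidableEq ι]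
    {M : Matrix ι ι R} {v : ι → R} (hv : Matrix.vecMul v M = 0) {i : ι}
    (hi : v i ∈ nonZeroDivisors R) : M.det = 0 := by
  have hdet : M.det • v = 0 := by
    calc M.det • v = Matrix.vecMul v (M * M.adjugate) := by
          rw [Matrix.mul_adjugate, Matrix.vecMul_smul, Matrix.vecMul_one]
      _ = 0 := by rw [← Matrix.vecMul_vecMul, hv, Matrix.zero_vecMul]
  exact (mul_right_mem_nonZeroDivisors_eq_zero_iff hi).mp (congrFun hdet i)

lemma sum_coeff_rev_mul_eq_zero_of_mul_mk_eq {n : ℕ} {c : ℕ → R} {q p : R[X]}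
    (hq : q.natDegree ≤ n) (hp : p.degree < n)
    (h : (q : R⟦X⟧) * PowerSeries.mk c = (p : R⟦X⟧)) (k : ℕ) :
    ∑ i : Fin (n + 1), q.coeff i.rev * c (i + k) = 0 := by
  calc ∑ i : Fin (n + 1), q.coeff i.rev * c (i + k)
      = ∑ i : Fin (n + 1), q.coeff i * c (n + k - i) := by
        refine Fintype.sum_equiv Fin.revPerm _ _ fun i ↦ ?_
        have hi : n + k - (i.rev : ℕ) = i + k := by
          rw [Fin.val_rev]
          lia
        rw [Fin.revPerm_apply, hi]
    _ = ∑ i ∈ range (n + 1), q.coeff i * c (n + k - i) :=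
        Fin.sum_univ_eq_sum_range (fun i ↦ q.coeff i * c (n + k - i)) (n + 1)
    _ = ∑ i ∈ range (n + k + 1), q.coeff i * c (n + k - i) := by
        refine sum_subset (range_subset_range.mpr (by lia)) fun i _ hi ↦ ?_
        have hqi : q.natDegree < i := by
          rw [mem_range] at hi
          lia
        rw [Polynomial.coeff_eq_zero_of_natDegree_lt hqi, zero_mul]
    _ = PowerSeries.coeff (n + k) ((q : R⟦X⟧) * PowerSeries.mk c) := by
        simp only [PowerSeries.coeff_mul, Polynomial.coeff_coe, PowerSeries.coeff_mk,
          Nat.sum_antidiagonal_eq_sum_range_succ_mk]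
    _ = 0 := by
        rw [h, Polynomial.coeff_coe]
        exact (Polynomial.degree_lt_iff_coeff_zero p n).mp hp (n + k) (Nat.le_add_right n k)

theorem det_hankel_eq_zero_of_mul_mk_eq {n : ℕ} {c : ℕ → R} {q p : R[X]}
    (hq : q.natDegree ≤ n) (hq₀ : q.coeff 0 ∈ nonZeroDivisors R) (hp : p.degree < n)
    (h : (q : R⟦X⟧) * PowerSeries.mk c = (p : R⟦X⟧)) (js : Fin (n + 1) → ℕ) :
    (Matrix.of fun i t : Fin (n + 1) ↦ c (i + js t)).det = 0 := by
  have hrows : Matrix.vecMul (fun i : Fin (n + 1) ↦ q.coeff i.rev)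
      (Matrix.of fun i t : Fin (n + 1) ↦ c (i + js t)) = 0 :=
    funext fun t ↦ sum_coeff_rev_mul_eq_zero_of_mul_mk_eq hq hp h (js t)
  exact det_eq_zero_of_vecMul_eq_zero_of_mem_nonZeroDivisors hrows (i := Fin.last n) (by simpa)

end Hankel

section CompleteHomogeneous

lemma monotone_cons_bot_iff {α : Type*} [Preorder α] [OrderBot α] {j : ℕ} {g : Fin j → α} :
    Monotone (Fin.cons ⊥ g : Fin (j + 1) → α) ↔ Monotone g := by
  simp [Monotone, Fin.forall_fin_succ]

lemma exists_monotone_succ_comp_eq {j m : ℕ} {f : Fin (j + 1) → Fin (m + 1)} (hf : Monotone f)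
    (hf₀ : f 0 ≠ 0) : ∃ g : Fin (j + 1) → Fin m, Monotone g ∧ Fin.succ ∘ g = f := by
  have hne (i : Fin (j + 1)) : f i ≠ 0 :=
    ((Fin.pos_iff_ne_zero.mpr hf₀).trans_le (hf (Fin.zero_le i))).ne'
  exact ⟨fun i ↦ (f i).pred (hne i), fun _ _ hab ↦ Fin.pred_le_pred_iff.mpr (hf hab),
    funext fun i ↦ Fin.succ_pred (f i) (hne i)⟩

lemma hsymm_eq_sum_monotone {m : ℕ} (j : ℕ) (v : Fin m → ℝ) :
    hsymm j v = ∑ f : Fin j → Fin m with Monotone f, ∏ i, v (f i) := by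
  unfold hsymm
  congr!

lemma hsymm_zero {m : ℕ} (v : Fin m → ℝ) : hsymm 0 v = 1 := by
  simp [hsymm, Subsingleton.monotone]

lemma hsymm_succ_fin_zero (j : ℕ) (v : Fin 0 → ℝ) : hsymm (j + 1) v = 0 := by
  simp [hsymm]

lemma sum_monotone_apply_zero_eq_zero {m : ℕ} (j : ℕ) (v : Fin (m + 1) → ℝ) :
    ∑ f : Fin (j + 1) → Fin (m + 1) with Monotone f ∧ f 0 = 0, ∏ i, v (f i) =
      v 0 * hsymm j v := by
  rw [hsymm_eq_sum_monotone, mul_sum]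
  refine sum_nbij' (i := Fin.tail) (j := fun g ↦ (Fin.cons 0 g : Fin (j + 1) → Fin (m + 1)))
    ?_ ?_ ?_ ?_ ?_
  · intro f hf
    have hmono := ((mem_filter_univ _).mp hf).1
    exact (mem_filter_univ _).mpr (hmono.comp Fin.strictMono_succ.monotone)
  · intro g hg
    exact (mem_filter_univ _).mpr ⟨monotone_cons_bot_iff.mpr ((mem_filter_univ _).mp hg), rfl⟩
  · intro f hf
    simp only [← ((mem_filter_univ _).mp hf).2, Fin.cons_self_tail]
  · exact fun g _ ↦ Fin.tail_cons (α := fun _ ↦ Fin (m + 1)) 0 g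
  · intro f hf
    rw [Fin.prod_univ_succ, ((mem_filter_univ _).mp hf).2]
    rfl

lemma sum_monotone_apply_zero_ne_zero {m : ℕ} (j : ℕ) (v : Fin (m + 1) → ℝ) :
    ∑ f : Fin (j + 1) → Fin (m + 1) with Monotone f ∧ f 0 ≠ 0, ∏ i, v (f i) =
      hsymm (j + 1) (Fin.tail v) := by
  rw [hsymm_eq_sum_monotone]
  symm
  refine sum_nbij (Fin.succ ∘ ·) ?_ ?_ ?_ ?_
  · intro g hg
    have hmono := (mem_filter_univ _).mp hg
    exact (mem_filter_univ _).mpr ⟨Fin.strictMono_succ.monotone.comp hmono, Fin.succ_ne_zero _⟩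
  · exact fun g _ g' _ h ↦ (Fin.succ_injective m).comp_left h
  · intro f hf
    obtain ⟨hmono, hf₀⟩ := (mem_filter_univ _).mp hf
    obtain ⟨g, hg, rfl⟩ := exists_monotone_succ_comp_eq hmono hf₀
    exact ⟨g, (mem_filter_univ _).mpr hg, rfl⟩
  · exact fun g _ ↦ rfl

lemma hsymm_succ {m : ℕ} (j : ℕ) (v : Fin (m + 1) → ℝ) :
    hsymm (j + 1) v = v 0 * hsymm j v + hsymm (j + 1) (Fin.tail v) := by
  rw [← sum_monotone_apply_zero_eq_zero, ← sum_monotone_apply_zero_ne_zero, hsymm_eq_sum_monotone,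
    ← sum_filter_add_sum_filter_not _ (fun f : Fin (j + 1) → Fin (m + 1) ↦ f 0 = 0),
    filter_filter, filter_filter]

lemma one_sub_mul_mk_hsymm {m : ℕ} (v : Fin (m + 1) → ℝ) :
    (1 - PowerSeries.C (v 0) * PowerSeries.X) * PowerSeries.mk (hsymm · v) =
      PowerSeries.mk (hsymm · (Fin.tail v)) := by
  ext j
  cases j with
  | zero => simp [hsymm_zero, sub_mul, mul_assoc]
  | succ j => simp [sub_mul, mul_assoc, PowerSeries.coeff_succ_X_mul, hsymm_succ]

lemma Qpoly_succ {m : ℕ} (v : Fin (m + 1) → ℝ) :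
    Qpoly (m + 1) v = (1 - Polynomial.C (v 0) * Polynomial.X) * Qpoly m (Fin.tail v) :=
  Fin.prod_univ_succ _

lemma Qpoly_mul_mk_hsymm {m : ℕ} (v : Fin m → ℝ) :
    (Qpoly m v : ℝ⟦X⟧) * PowerSeries.mk (hsymm · v) = 1 := by
  induction m with
  | zero =>
    ext j
    cases j <;> simp [Qpoly, hsymm_zero, hsymm_succ_fin_zero, PowerSeries.coeff_one]
  | succ m ih =>
    calc (Qpoly (m + 1) v : ℝ⟦X⟧) * PowerSeries.mk (hsymm · v)
        = (Qpoly m (Fin.tail v) : ℝ⟦X⟧) *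
            ((1 - PowerSeries.C (v 0) * PowerSeries.X) * PowerSeries.mk (hsymm · v)) := by
          rw [Qpoly_succ]
          push_cast
          ring
      _ = 1 := by rw [one_sub_mul_mk_hsymm, ih]

end CompleteHomogeneous

section MomentSequence

variable {d n : ℕ} (x : Fin n → ℝ) (α : Fin (n - d) → ℝ)

/-- The inclusion of the window of `d + 1` consecutive indices `i, …, i + d` into `Fin n`, through
which the amplitude `α i` sees the nodes. -/
def window (i : Fin (n - d)) : Fin (d + 1) ↪ Fin n :=
  (Fin.natAddEmb i.1).trans (Fin.castLEEmb (by lia))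

lemma filter_outside_window (i : Fin (n - d)) :
    univ.filter (fun r : Fin n ↦ r.1 < i.1 ∨ i.1 + d < r.1) = (univ.map (window i))ᶜ := by
  ext r
  simp only [mem_filter_univ, mem_compl, mem_map, mem_univ, true_and, not_exists]
  constructor
  · rintro hr k rfl
    have hk : (window i k : ℕ) = i + k := rfl
    lia
  · intro hr
    by_contra! h
    exact hr ⟨r - i, by lia⟩ (Fin.ext (Nat.add_sub_cancel' h.1))

lemma Rpoly_eq_sum_prod_compl_window :
    Rpoly d n x α = ∑ i, Polynomial.C (α i) *
      ∏ r ∈ (univ.map (window i))ᶜ, (1 - Polynomial.C (x r) * Polynomial.X) := by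
  simp only [Rpoly, filter_outside_window]

lemma Qpoly_eq_mul_prod_compl_window (i : Fin (n - d)) :
    Qpoly n x = Qpoly (d + 1) (x ∘ window i) *
      ∏ r ∈ (univ.map (window i))ᶜ, (1 - Polynomial.C (x r) * Polynomial.X) := by
  rw [Qpoly, Qpoly, ← prod_mul_prod_compl (univ.map (window i)), prod_map]
  rfl

lemma Qpoly_mul_mk_hsymm_window (i : Fin (n - d)) :
    (Qpoly n x : ℝ⟦X⟧) * PowerSeries.mk (hsymm · (x ∘ window i)) =
      ((∏ r ∈ (univ.map (window i))ᶜ, (1 - Polynomial.C (x r) * Polynomial.X) : ℝ[X]) : ℝ⟦X⟧) := by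
  rw [Qpoly_eq_mul_prod_compl_window x i, Polynomial.coe_mul, mul_right_comm, Qpoly_mul_mk_hsymm,
    one_mul]

lemma mk_cseq :
    PowerSeries.mk (cseq d n x α) = PowerSeries.X ^ d *
      ∑ i, PowerSeries.C (α i) * PowerSeries.mk (hsymm · (x ∘ window i)) := by
  ext j
  rw [PowerSeries.coeff_mk, PowerSeries.coeff_X_pow_mul', cseq]
  simp only [map_sum, PowerSeries.coeff_C_mul, PowerSeries.coeff_mk]
  rfl

theorem Qpoly_mul_mk_cseq :
    (Qpoly n x : ℝ⟦X⟧) * PowerSeries.mk (cseq d n x α) =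
      ((Polynomial.X ^ d * Rpoly d n x α : ℝ[X]) : ℝ⟦X⟧) := by
  calc (Qpoly n x : ℝ⟦X⟧) * PowerSeries.mk (cseq d n x α)
      = PowerSeries.X ^ d * ∑ i, PowerSeries.C (α i) *
          ((Qpoly n x : ℝ⟦X⟧) * PowerSeries.mk (hsymm · (x ∘ window i))) := by
        simp only [mk_cseq, mul_sum, mul_left_comm]
    _ = ((Polynomial.X ^ d * Rpoly d n x α : ℝ[X]) : ℝ⟦X⟧) := by
        simp only [Qpoly_mul_mk_hsymm_window, Rpoly_eq_sum_prod_compl_window]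
        simp only [← Polynomial.coeToPowerSeries.ringHom_apply, map_mul, map_pow, map_sum]
        simp only [Polynomial.coeToPowerSeries.ringHom_apply, Polynomial.coe_X, Polynomial.coe_C]

lemma degree_X_pow_mul_Rpoly_lt :
    (Polynomial.X ^ d * Rpoly d n x α : ℝ[X]).degree < (n : WithBot ℕ) := by
  rw [Rpoly_eq_sum_prod_compl_window, mul_sum, ← Polynomial.mem_degreeLT]
  refine Submodule.sum_mem _ fun i _ ↦ Polynomial.mem_degreeLT.mpr ?_
  have hcard : d + #(univ.map (window i))ᶜ < n := by
    rw [card_compl, card_map, card_fin, Fintype.card_fin]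
    have := i.isLt
    lia
  refine Polynomial.degree_le_natDegree.trans_lt (Nat.cast_lt.mpr (lt_of_le_of_lt ?_ hcard))
  exact Polynomial.natDegree_mul_le_of_le (Polynomial.natDegree_X_pow_le d)
    ((Polynomial.natDegree_C_mul_le _ _).trans (natDegree_prod_one_sub_C_mul_X_le _ x))

end MomentSequence

theorem hankel_rank_at_most_n_general (d n : ℕ) (x : Fin n → ℝ) (α : Fin (n - d) → ℝ)
    (js : Fin (n + 1) → ℕ) :
    (Matrix.of fun (i t : Fin (n + 1)) => cseq d n x α (i.1 + js t)).det = 0 := by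
  have hdeg : (Qpoly n x).natDegree ≤ n := by
    simpa [Qpoly] using natDegree_prod_one_sub_C_mul_X_le univ x
  have hcoeff : (Qpoly n x).coeff 0 ∈ nonZeroDivisors ℝ := by
    simp [Qpoly, Polynomial.coeff_zero_prod]
  exact det_hankel_eq_zero_of_mul_mk_eq hdeg hcoeff (degree_X_pow_mul_Rpoly_lt x α)
    (Qpoly_mul_mk_cseq x α) js

/-- **Hankel rank bound for the normalized moments.** Every `(n+1)×(n+1)` minor
of the infinite Hankel matrix `(c_{i+j})` vanishes: for all column indices
`j_0 < j_1 < ⋯ < j_n`, the determinant of `(c_{i + j_t})_{0 ≤ i,t ≤ n}` is zero. -/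
theorem hankel_rank_at_most_n (d n : ℕ) (hn : d + 1 ≤ n)
    (x : Fin n → ℝ) (hx : StrictMono x) (α : Fin (n - d) → ℝ) :
    ∀ js : Fin (n + 1) → ℕ, StrictMono js →
      (Matrix.of fun (i t : Fin (n + 1)) => cseq d n x α (i.1 + js t)).det = 0 := by
  intro js _
  exact hankel_rank_at_most_n_general d n x α js
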